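/- arXiv:1708.05322 — 4 statements merged into one kernel-verified Lean document; each statement's English description precedes it below -/
import Mathlib

section
/- The Solecki ideal S has a Borel selector: there is a Borel function S : P(Ω) → P(Ω) such that for every infinite X ⊆ Ω, S(X) is an infinite subset of X belonging to the Solecki ideal. -/
open MeasureTheory

namespace SoleckiAux

variable {Ω α : Type*} [MeasurableSpace α]

/-- Points lying in infinitely many of the sets selected by `X`. -/
def limSet (e : Ω → ℕ) (d : Ω → Set α) (X : Ω → Bool) : Set α :=
  {x | ∀ n : ℕ, ∃ D, n ≤ e D ∧ X D = true ∧ x ∈ d D}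

/-- Intersection of a finite family. -/
def inter (d : Ω → Set α) (s : Finset Ω) : Set α := {x | ∀ D ∈ s, x ∈ d D}

/-- One greedy step is allowed. -/
def good (μ : Measure α) (e : Ω → ℕ) (d : Ω → Set α) (n : ℕ) (s : Finset Ω)
    (X : Ω → Bool) (D : Ω) : Prop :=
  e D = n ∧ X D = true ∧ μ (inter d s ∩ d D ∩ limSet e d X) ≠ 0

open Classical in
/-- Greedy choice up to stage `n`. -/
noncomputable def greedy (μ : Measure α) (e : Ω → ℕ) (d : Ω → Set α) (X : Ω → Bool) :
    ℕ → Finset Ω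
  | 0 => ∅
  | n + 1 => if h : ∃ D, good μ e d n (greedy μ e d X n) X D
      then insert h.choose (greedy μ e d X n) else greedy μ e d X n

variable {μ : Measure α} {e : Ω → ℕ} {d : Ω → Set α} {X : Ω → Bool}

theorem mem_greedy_succ (he : Function.Injective e) (n : ℕ) (D : Ω) :
    D ∈ greedy μ e d X (n + 1) ↔
      D ∈ greedy μ e d X n ∨ good μ e d n (greedy μ e d X n) X D := by
  classical
  rw [greedy]
  split_ifs with h
  · rw [Finset.mem_insert]
    have hs := h.choose_spec
    constructor
    · rintro (h1 | h1)
      · right; rw [h1]; exact hs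
      · exact Or.inl h1
    · rintro (h1 | h1)
      · exact Or.inr h1
      · left; exact he (h1.1.trans hs.1.symm)
  · constructor
    · exact Or.inl
    · rintro (h1 | h1)
      · exact h1
      · exact absurd ⟨D, h1⟩ h

theorem greedy_lt (he : Function.Injective e) (n : ℕ) :
    ∀ D ∈ greedy μ e d X n, e D < n ∧ X D = true := by
  induction n with
  | zero => intro D hD; simp [greedy] at hD
  | succ n ih =>
    intro D hD
    rcases (mem_greedy_succ he n D).1 hD with h | h
    · exact ⟨(ih D h).1.trans (Nat.lt_succ_self n), (ih D h).2⟩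
    · exact ⟨by rw [h.1]; exact Nat.lt_succ_self n, h.2.1⟩

theorem greedy_mono (he : Function.Injective e) : Monotone (greedy μ e d X) :=
  monotone_nat_of_le_succ fun n D hD => (mem_greedy_succ he n D).2 (Or.inl hD)

theorem mem_greedy_iff (he : Function.Injective e) {n : ℕ} {D : Ω} (h : e D < n) :
    D ∈ greedy μ e d X n ↔ D ∈ greedy μ e d X (e D + 1) := by
  constructor
  · intro hD
    obtain ⟨k, rfl⟩ := Nat.exists_eq_add_of_le (Nat.succ_le_of_lt h)
    clear h
    induction k with
    | zero => exact hD
    | succ k ih =>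
      rcases (mem_greedy_succ he _ D).1 hD with h | h
      · exact ih h
      · have h1 := h.1
        simp only [Nat.succ_eq_add_one] at h1
        exact absurd h1 (by change ¬ (e D = e D + 1 + k); omega)
  · exact fun hD => greedy_mono he (Nat.succ_le_of_lt h) hD

theorem greedy_pos (he : Function.Injective e) (h0 : μ (limSet e d X) ≠ 0) (n : ℕ) :
    μ (inter d (greedy μ e d X n) ∩ limSet e d X) ≠ 0 := by
  induction n with
  | zero => simpa [greedy, inter] using h0
  | succ n ih =>
    rw [greedy]
    split_ifs with h
    · have hs := h.choose_spec.2.2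
      convert hs using 3
      ext x
      simp [inter, and_comm]
    · exact ih

theorem limSet_pos [Countable Ω] [IsFiniteMeasure μ] (he : Function.Injective e)
    (hd : ∀ D, MeasurableSet (d D)) {c : ENNReal} (hc : c ≠ 0) (hdc : ∀ D, μ (d D) = c)
    (hX : {D | X D = true}.Infinite) : μ (limSet e d X) ≠ 0 := by
  let U : ℕ → Set α := fun n => ⋃ D : {D // n ≤ e D ∧ X D = true}, d D
  have hL : limSet e d X = ⋂ n, U n := by
    ext x; simp [limSet, U, and_assoc]
  have hU : Antitone U := by
    intro m n hmn x hx
    simp only [U, Set.mem_iUnion] at hx ⊢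
    obtain ⟨⟨D, h1, h2⟩, hx⟩ := hx
    exact ⟨⟨D, hmn.trans h1, h2⟩, hx⟩
  have hm : ∀ n, MeasurableSet (U n) := fun n => MeasurableSet.iUnion fun D => hd D
  have ht := tendsto_measure_iInter_atTop (μ := μ) (fun n => (hm n).nullMeasurableSet) hU
    ⟨0, measure_ne_top _ _⟩
  have hle : ∀ n, c ≤ μ (U n) := by
    intro n
    obtain ⟨D, hD, hn⟩ : ∃ D, X D = true ∧ n ≤ e D := by
      by_contra hcon
      push Not at hcon
      refine hX (Set.Finite.subset ((Set.finite_lt_nat n).preimage he.injOn) ?_)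
      intro D hD
      exact hcon D hD
    rw [← hdc D]
    exact measure_mono (Set.subset_iUnion (fun D : {D // n ≤ e D ∧ X D = true} => d D)
      ⟨D, hn, hD⟩)
  rw [hL]
  have := ge_of_tendsto' ht hle
  intro h
  rw [h] at this
  exact hc (le_antisymm this bot_le)

theorem greedy_infinite [Countable Ω] (he : Function.Injective e)
    (h0 : μ (limSet e d X) ≠ 0) :
    {D | D ∈ greedy μ e d X (e D + 1)}.Infinite := by
  intro hfin
  obtain ⟨N, hN⟩ := (hfin.image e).bddAbove
  have hst : ∀ D, N < e D → D ∉ greedy μ e d X (e D + 1) := fun D h1 h2 =>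
    absurd (hN ⟨D, h2, rfl⟩) (by omega)
  have hsub : ∀ n, N + 1 ≤ n → greedy μ e d X n = greedy μ e d X (N + 1) := by
    intro n hn
    refine le_antisymm (fun D hD => ?_) (greedy_mono he hn)
    have h1 := (greedy_lt he n D hD).1
    have h2 := (mem_greedy_iff he h1).1 hD
    have h3 : e D ≤ N := by
      by_contra h; exact hst D (by omega) h2
    exact (mem_greedy_iff he (by omega)).2 h2
  apply greedy_pos (μ := μ) (d := d) (X := X) he h0 (N + 1)
  refine measure_mono_null (t := ⋃ D : {D // N + 1 ≤ e D ∧ X D = true},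
    (inter d (greedy μ e d X (N + 1)) ∩ d D ∩ limSet e d X)) ?_ ?_
  · rintro x ⟨h1, h2⟩
    obtain ⟨D, h3, h4, h5⟩ := h2 (N + 1)
    exact Set.mem_iUnion.2 ⟨⟨D, h3, h4⟩, ⟨h1, h5⟩, h2⟩
  · rw [measure_iUnion_null_iff]
    rintro ⟨D, h1, h2⟩
    by_contra hne
    refine hst D (by omega) ((mem_greedy_succ he _ D).2 (Or.inr ⟨rfl, h2, ?_⟩))
    rw [hsub _ h1]
    exact hne

theorem measurableSet_good [Countable Ω] [SFinite μ] (hd : ∀ D, MeasurableSet (d D))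
    (n : ℕ) (s : Finset Ω) (D : Ω) : MeasurableSet {X : Ω → Bool | good μ e d n s X D} := by
  have hX : ∀ D, MeasurableSet {X : Ω → Bool | X D = true} := fun D =>
    (measurable_pi_apply (X := fun _ : Ω => Bool) D) (measurableSet_singleton true)
  have hi : MeasurableSet (inter d s) := by
    have : inter d s = ⋂ D ∈ s, d D := by ext x; simp [inter]
    rw [this]
    exact s.measurableSet_biInter fun D _ => hd D
  have hp : MeasurableSet {p : (Ω → Bool) × α | p.2 ∈ inter d s ∩ d D ∩ limSet e d p.1} := by
    have h1 : MeasurableSet {p : (Ω → Bool) × α | p.2 ∈ limSet e d p.1} := by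
      have : {p : (Ω → Bool) × α | p.2 ∈ limSet e d p.1} =
          ⋂ n : ℕ, ⋃ D : {D // n ≤ e D}, (Prod.fst ⁻¹' {X : Ω → Bool | X D = true}) ∩
            Prod.snd ⁻¹' d D := by
        ext p; simp [limSet, and_left_comm]
      rw [this]
      exact MeasurableSet.iInter fun n => MeasurableSet.iUnion fun D =>
        (measurable_fst (hX D)).inter (measurable_snd (hd D))
    exact (measurable_snd (hi.inter (hd D))).inter h1
  have hmm := measurable_measure_prodMk_left (ν := μ) hp
  have h2 : MeasurableSet {X : Ω → Bool | μ (inter d s ∩ d D ∩ limSet e d X) ≠ 0} :=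
    hmm (measurableSet_singleton 0).compl
  exact (MeasurableSet.const _).inter ((hX D).inter h2)

theorem measurableSet_greedy [Countable Ω] [SFinite μ] (he : Function.Injective e)
    (hd : ∀ D, MeasurableSet (d D)) (n : ℕ) :
    ∀ s : Finset Ω, MeasurableSet {X : Ω → Bool | greedy μ e d X n = s} := by
  induction n with
  | zero => intro s; simp only [greedy]; exact MeasurableSet.const _
  | succ n ih =>
    intro s
    have : {X : Ω → Bool | greedy μ e d X (n + 1) = s} =
        ⋃ t : Finset Ω, {X | greedy μ e d X n = t} ∩
          ⋂ D, {X | D ∈ s ↔ (D ∈ t ∨ good μ e d n t X D)} := by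
      ext X
      simp only [Set.mem_setOf_eq, Set.mem_iUnion, Set.mem_inter_iff, Set.mem_iInter]
      rw [Finset.ext_iff]
      constructor
      · intro h
        exact ⟨_, rfl, fun D => (h D).symm.trans (mem_greedy_succ he n D)⟩
      · rintro ⟨t, rfl, h⟩ D
        exact (mem_greedy_succ he n D).trans (h D).symm
    rw [this]
    refine MeasurableSet.iUnion fun t => (ih t).inter (MeasurableSet.iInter fun D => ?_)
    exact (MeasurableSet.const _).iff ((MeasurableSet.const _).union (measurableSet_good hd n t D))

end SoleckiAux

/-- The Solecki ideal has a Borel selector.  Here `μ` is the uniform product (coin-flipping)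
measure on `2^ℕ` (characterized on cylinders), `Ω` is the countable set of clopen subsets of
`2^ℕ` of measure `1/2` (as a subtype), subsets of `Ω` are coded by characteristic functions,
and membership of a set in the Solecki ideal is written out: it is covered by finitely many sets
`E_x = {D ∈ Ω : x ∈ D}` together with a finite set. -/
theorem solecki_has_borel_selector (μ : Measure (ℕ → Bool))
    (hprob : IsProbabilityMeasure μ)
    (hcyl : ∀ l : List Bool,
      μ {x : ℕ → Bool | ∀ i : Fin l.length, x i = l.get i} = (2 : ENNReal)⁻¹ ^ l.length) :
    ∃ S : ({D : Set (ℕ → Bool) // IsClopen D ∧ μ D = 2⁻¹} → Bool) →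
          ({D : Set (ℕ → Bool) // IsClopen D ∧ μ D = 2⁻¹} → Bool),
      Measurable S ∧
      ∀ X : {D : Set (ℕ → Bool) // IsClopen D ∧ μ D = 2⁻¹} → Bool,
        {D | X D = true}.Infinite →
          (∃ (T : Finset (ℕ → Bool))
             (F0 : Set {D : Set (ℕ → Bool) // IsClopen D ∧ μ D = 2⁻¹}),
              F0.Finite ∧
              ∀ D, S X D = true → D ∈ F0 ∨ ∃ x ∈ T, x ∈ (D : Set (ℕ → Bool))) ∧
          {D | S X D = true}.Infinite ∧
          ∀ D, S X D = true → X D = true := by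
  classical
  have hcount : Countable {D : Set (ℕ → Bool) // IsClopen D ∧ μ D = 2⁻¹} := by
    have : Countable (TopologicalSpace.Clopens (ℕ → Bool)) :=
      TopologicalSpace.Clopens.countable_iff_secondCountable.2 inferInstance
    refine Function.Injective.countable (β := TopologicalSpace.Clopens (ℕ → Bool))
      (f := fun D => ⟨D.1, D.2.1⟩) ?_
    intro A B h
    exact Subtype.ext (congrArg TopologicalSpace.Clopens.carrier h)
  obtain ⟨e, he⟩ := exists_injective_nat {D : Set (ℕ → Bool) // IsClopen D ∧ μ D = 2⁻¹}
  let d : {D : Set (ℕ → Bool) // IsClopen D ∧ μ D = 2⁻¹} → Set (ℕ → Bool) := Subtype.val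
  have hd : ∀ D, MeasurableSet (d D) := fun D => D.2.1.isOpen.measurableSet
  refine ⟨fun X D => decide (D ∈ SoleckiAux.greedy μ e d X (e D + 1)), ?_, ?_⟩
  · refine measurable_pi_lambda _ fun D => measurable_to_bool ?_
    have : (fun X => decide (D ∈ SoleckiAux.greedy μ e d X (e D + 1))) ⁻¹' {true} =
        ⋃ s : {s : Finset _ // D ∈ s}, {X | SoleckiAux.greedy μ e d X (e D + 1) = s} := by
      ext X; simp
    rw [this]
    exact MeasurableSet.iUnion fun s => SoleckiAux.measurableSet_greedy he hd _ _
  · intro X hX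
    have h0 : μ (SoleckiAux.limSet e d X) ≠ 0 :=
      SoleckiAux.limSet_pos he hd (c := 2⁻¹) (by simp) (fun D => D.2.2) hX
    refine ⟨?_, ?_, ?_⟩
    · have hcl : ∀ n, IsClosed (SoleckiAux.inter d (SoleckiAux.greedy μ e d X n)) := by
        intro n
        have : SoleckiAux.inter d (SoleckiAux.greedy μ e d X n) =
            ⋂ D ∈ SoleckiAux.greedy μ e d X n, d D := by ext x; simp [SoleckiAux.inter]
        rw [this]
        exact isClosed_biInter fun D _ => D.2.1.isClosed
      obtain ⟨x, hx⟩ := IsCompact.nonempty_iInter_of_sequence_nonempty_isCompact_isClosed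
        (fun n => SoleckiAux.inter d (SoleckiAux.greedy μ e d X n))
        (fun n x hx D hD => hx D (SoleckiAux.greedy_mono he (Nat.le_succ n) hD))
        (fun n => (nonempty_of_measure_ne_zero (SoleckiAux.greedy_pos he h0 n)).mono
          Set.inter_subset_left)
        (hcl 0).isCompact hcl
      refine ⟨{x}, ∅, Set.finite_empty, fun D hD => Or.inr ⟨x, by simp, ?_⟩⟩
      exact Set.mem_iInter.1 hx (e D + 1) D (of_decide_eq_true hD)
    · simpa using SoleckiAux.greedy_infinite he h0
    · intro D hD
      exact (SoleckiAux.greedy_lt he _ D (of_decide_eq_true hD)).2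
end

section
/- Let I be an ideal on ℕ that is not ω-hitting, and let g : [ℕ]^∞ → P(ℕ) be a continuous function (where [ℕ]^∞, the infinite subsets of ℕ, and P(ℕ) carry the subspace/Cantor topology of 2^ℕ) such that g(A) ⊆ A for every infinite A ⊆ ℕ. Then there exists an infinite B ⊆ ℕ with g(B) ∉ I. In particular, an ideal admitting a continuous selector is ω-hitting. -/
/-- `x` is a subset of `y`, for subsets of `α` coded as characteristic functions. -/
def subB {α : Type} (x y : α → Bool) : Prop := ∀ a, x a = true → y a = true

/-- Union of two subsets of `α` coded as characteristic functions. -/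
def unionB {α : Type} (x y : α → Bool) : α → Bool := fun a => x a || y a

/-- The set coded by a characteristic function. -/
def suppB {α : Type} (x : α → Bool) : Set α := {a | x a = true}

/-- The coded set is infinite. -/
def InfiniteB {α : Type} (x : α → Bool) : Prop := (suppB x).Infinite

/-- `I` is an ideal: closed under subsets and (finite) unions. -/
def IsIdealB {α : Type} (I : Set (α → Bool)) : Prop :=
  (∀ x ∈ I, ∀ y, subB y x → y ∈ I) ∧ ∀ x ∈ I, ∀ y ∈ I, unionB x y ∈ I

/-- `I` is tall: every infinite set has an infinite subset in `I`. -/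
def IsTallB {α : Type} (I : Set (α → Bool)) : Prop :=
  ∀ x, InfiniteB x → ∃ y ∈ I, InfiniteB y ∧ subB y x

/-- `I` contains all finite sets. -/
def ContainsFinB {α : Type} (I : Set (α → Bool)) : Prop :=
  ∀ x : α → Bool, (suppB x).Finite → x ∈ I

/-- `I` is an `F_σ` subset of the Cantor space `α → Bool`. -/
def IsFsigmaB {α : Type} (I : Set (α → Bool)) : Prop :=
  ∃ F : ℕ → Set (α → Bool), (∀ n, IsClosed (F n)) ∧ I = ⋃ n, F n

/-- Katětov order: `I ≤_K J` via some `f` with `f⁻¹[A] ∈ J` for all `A ∈ I`. -/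
def KatLE {α β : Type} (I : Set (α → Bool)) (J : Set (β → Bool)) : Prop :=
  ∃ f : β → α, ∀ x ∈ I, (fun b => x (f b)) ∈ J


/-- The set `[ℕ]^∞` of (characteristic functions of) infinite subsets of `ℕ`, as a subspace of
the Cantor space. -/
def InfiniteSets : Set (ℕ → Bool) := {x | (suppB x).Infinite}

/-- `I` is ω-hitting: for every countable family of infinite sets there is a member of `I`
meeting all of them. -/
def OmegaHitting (I : Set (ℕ → Bool)) : Prop :=
  ∀ X : ℕ → (ℕ → Bool), (∀ n, InfiniteB (X n)) →
    ∃ B ∈ I, ∀ n, ∃ m, B m = true ∧ X n m = true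


theorem selector_step (g : ↥InfiniteSets → (ℕ → Bool)) (hg : Continuous g)
    (h : ∀ A : ↥InfiniteSets, InfiniteB (g A) ∧ subB (g A) ↑A)
    (Y : ℕ → Bool) (hY : InfiniteB Y) (x : ℕ → Bool) (k : ℕ) :
    ∃ (y : ℕ → Bool) (k' m : ℕ), k < k' ∧ k ≤ m ∧ m < k' ∧ Y m = true ∧ y m = true ∧
      (∀ i < k, y i = x i) ∧
      ∀ B : ↥InfiniteSets, (∀ i < k', (B : ℕ → Bool) i = y i) → g B m = true := by
  let y : ℕ → Bool := fun i => if i < k then x i else Y i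
  have hy : y ∈ InfiniteSets := by
    refine (hY.sdiff (Set.finite_Iio k)).mono ?_
    rintro i ⟨hi, hik⟩
    have hik' : ¬ i < k := hik
    simp only [suppB, Set.mem_ofPred_eq] at hi ⊢
    simp [y, hik', hi]
  obtain ⟨hinf, hsub⟩ := h ⟨y, hy⟩
  obtain ⟨m, hm, hmk⟩ := hinf.exists_gt k
  have hgm : g ⟨y, hy⟩ m = true := hm
  have hym : y m = true := hsub m hgm
  have hYm : Y m = true := by
    have : ¬ m < k := by omega
    simpa [y, this] using hym
  have hopen : IsOpen {A : ↥InfiniteSets | g A m = true} :=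
    (isOpen_discrete {true}).preimage ((continuous_apply m).comp hg)
  obtain ⟨U, hU, hUe⟩ := isOpen_induced_iff.1 hopen
  have hyU : y ∈ U := by
    have : (⟨y, hy⟩ : ↥InfiniteSets) ∈ Subtype.val ⁻¹' U := by rw [hUe]; exact hgm
    exact this
  obtain ⟨S, u, hu, hsu⟩ := isOpen_pi_iff.1 hU y hyU
  refine ⟨y, S.sup id + m + 1, m, by omega, by omega, by omega, hYm, hym, ?_, ?_⟩
  · intro i hi
    simp [y, hi]
  · intro B hB
    have : B ∈ Subtype.val ⁻¹' U := by
      apply hsu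
      intro i hi
      have h1 : i ≤ S.sup id := Finset.le_sup (f := id) hi
      rw [hB i (by omega)]
      exact (hu i hi).2
    rw [hUe] at this
    exact this

theorem selector_meets (g : ↥InfiniteSets → (ℕ → Bool)) (hg : Continuous g)
    (h : ∀ A : ↥InfiniteSets, InfiniteB (g A) ∧ subB (g A) ↑A)
    (X : ℕ → (ℕ → Bool)) (hX : ∀ n, InfiniteB (X n)) :
    ∃ B : ↥InfiniteSets, ∀ n, ∃ m, g B m = true ∧ X n m = true := by
  choose y k' m h1 h2 h3 h4 h5 h6 h7 using
    fun (n : ℕ) (x : ℕ → Bool) (k : ℕ) => selector_step g hg h (X n) (hX n) x k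
  let s : ℕ → (ℕ → Bool) × ℕ := fun n =>
    Nat.rec (fun _ => false, 0) (fun n p => (y n p.1 p.2, k' n p.1 p.2)) n
  have s1 : ∀ n, (s (n+1)).1 = y n (s n).1 (s n).2 := fun n => rfl
  have s2 : ∀ n, (s (n+1)).2 = k' n (s n).1 (s n).2 := fun n => rfl
  have hmono : StrictMono (fun n => (s n).2) := strictMono_nat_of_lt_succ fun n => by
    simp only [s2]; exact h1 _ _ _
  have hk : ∀ n, n ≤ (s n).2 := fun n => hmono.le_apply
  have agree : ∀ n d i, i < (s n).2 → (s (n+d)).1 i = (s n).1 i := by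
    intro n d i hi
    induction d with
    | zero => rfl
    | succ d ih =>
      rw [← ih, ← add_assoc, s1]
      exact h6 _ _ _ _ (lt_of_lt_of_le hi (hmono.monotone (by omega)))
  let B : ℕ → Bool := fun i => (s (i+1)).1 i
  have hB : ∀ n i, i < (s n).2 → B i = (s n).1 i := by
    intro n i hi
    have a1 := agree n (i+1) i hi
    have a2 := agree (i+1) n i (hk (i+1))
    rw [add_comm] at a2
    exact a2.symm.trans a1
  have hBinf : B ∈ InfiniteSets := by
    refine Set.infinite_of_forall_exists_gt fun a => ?_
    refine ⟨m (a+1) (s (a+1)).1 (s (a+1)).2, ?_, ?_⟩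
    · change B _ = true
      rw [hB (a+2) _ (by rw [s2]; exact h3 _ _ _), s1]
      exact h5 _ _ _
    · have := h2 (a+1) (s (a+1)).1 (s (a+1)).2
      have := hk (a+1)
      omega
  refine ⟨⟨B, hBinf⟩, fun n => ⟨m n (s n).1 (s n).2, ?_, h4 _ _ _⟩⟩
  apply h7
  intro i hi
  exact hB (n+1) i hi

/-- If an ideal `I` on `ℕ` is not ω-hitting, then for every continuous `g : [ℕ]^∞ → P(ℕ)` with
`g(A)` an infinite subset of `A` for all `A`, there is an infinite `B` with `g(B) ∉ I`.
In particular, an ideal admitting a continuous selector is ω-hitting. -/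
theorem not_omegaHitting_no_continuous_selector :
    (∀ I : Set (ℕ → Bool), IsIdealB I → ¬ OmegaHitting I →
      ∀ g : ↥InfiniteSets → (ℕ → Bool), Continuous g →
        (∀ A : ↥InfiniteSets, InfiniteB (g A) ∧ subB (g A) ↑A) →
        ∃ B : ↥InfiniteSets, g B ∉ I) ∧
    ∀ I : Set (ℕ → Bool), IsIdealB I →
      (∃ g : ↥InfiniteSets → (ℕ → Bool), Continuous g ∧
        ∀ A : ↥InfiniteSets, g A ∈ I ∧ InfiniteB (g A) ∧ subB (g A) ↑A) →
      OmegaHitting I := by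
  have key : ∀ I : Set (ℕ → Bool), ¬ OmegaHitting I →
      ∀ g : ↥InfiniteSets → (ℕ → Bool), Continuous g →
        (∀ A : ↥InfiniteSets, InfiniteB (g A) ∧ subB (g A) ↑A) →
        ∃ B : ↥InfiniteSets, g B ∉ I := by
    intro I hI g hg h
    by_contra! hc
    apply hI
    intro X hX
    obtain ⟨B, hB⟩ := selector_meets g hg h X hX
    exact ⟨g B, hc B, hB⟩
  refine ⟨fun I _ => key I, ?_⟩
  rintro I - ⟨g, hg, h⟩
  by_contra hI
  obtain ⟨B, hB⟩ := key I hI g hg fun A => (h A).2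
  exact hB (h B).1
end

section
/- Let I be an ideal on ℕ and suppose there is a partition of ℕ into consecutive nonempty finite intervals {Iₙ : n ∈ ℕ} such that every set A ⊆ ℕ with |A ∩ Iₙ| ≤ 1 for all n belongs to I. Then the map g defined by g(A) = {min(A ∩ Iₙ) : n ∈ ℕ, A ∩ Iₙ ≠ ∅} is a continuous selector for I: g is continuous on [ℕ]^∞ (with the subspace topology of 2^ℕ) and for every infinite A ⊆ ℕ, g(A) is an infinite subset of A belonging to I. -/
/-- If `ℕ` is partitioned into consecutive finite intervals `Iₙ = [k(n), k(n+1))` such that every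
set meeting each interval in at most one point belongs to the ideal `I`, then the map
`g(A) = {min (A ∩ Iₙ) : A ∩ Iₙ ≠ ∅}` is a continuous selector for `I`. -/
theorem interval_min_continuous_selector (I : Set (ℕ → Bool)) (hI : IsIdealB I)
    (k : ℕ → ℕ) (hk0 : k 0 = 0) (hkmono : StrictMono k)
    (hsel : ∀ x : ℕ → Bool,
      (∀ n, (suppB x ∩ Set.Ico (k n) (k (n + 1))).Subsingleton) → x ∈ I)
    (g : (ℕ → Bool) → (ℕ → Bool))
    (hg : ∀ x m, g x m = true ↔
      ∃ n, m ∈ suppB x ∩ Set.Ico (k n) (k (n + 1)) ∧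
        ∀ j ∈ suppB x ∩ Set.Ico (k n) (k (n + 1)), m ≤ j) :
    Continuous (fun A : ↥InfiniteSets => g ↑A) ∧
    ∀ x : ℕ → Bool, InfiniteB x → g x ∈ I ∧ InfiniteB (g x) ∧ subB (g x) x := by
  have hex : ∀ m, ∃ n, m ∈ Set.Ico (k n) (k (n + 1)) := by
    intro m
    have h : ∃ n, m < k (n + 1) := ⟨m, lt_of_lt_of_le (Nat.lt_succ_self m) hkmono.le_apply⟩
    classical
    refine ⟨Nat.find h, ?_, Nat.find_spec h⟩
    rcases hn : Nat.find h with _ | j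
    · rw [hk0]; exact Nat.zero_le _
    · have := Nat.find_min h (m := j) (by omega)
      exact not_lt.mp this
  have huniq : ∀ m n n', m ∈ Set.Ico (k n) (k (n + 1)) → m ∈ Set.Ico (k n') (k (n' + 1)) →
      n = n' := by
    intro m n n' h h'
    have h1 : n < n' + 1 := hkmono.lt_iff_lt.mp (lt_of_le_of_lt h.1 h'.2)
    have h2 : n' < n + 1 := hkmono.lt_iff_lt.mp (lt_of_le_of_lt h'.1 h.2)
    omega
  have hsub : ∀ x, subB (g x) x := by
    intro x m hm
    obtain ⟨n, h, -⟩ := (hg x m).mp hm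
    exact h.1
  refine ⟨?_, ?_⟩
  · have hc : Continuous g := by
      refine continuous_pi fun m => ?_
      refine IsLocallyConstant.continuous ?_
      rw [IsLocallyConstant.iff_eventually_eq]
      intro x
      obtain ⟨n, hn⟩ := hex m
      have hev : ∀ᶠ y in nhds x, ∀ i ∈ Set.Iio (k (n + 1)), y i = x i := by
        rw [Filter.eventually_all_finite (Set.finite_Iio _)]
        intro i _
        have hci : Continuous fun y : ℕ → Bool => y i := continuous_apply i
        exact hci.continuousAt.eventually (p := fun b => b = x i) (by simp [nhds_discrete])
      have key : ∀ y z : ℕ → Bool, (∀ i ∈ Set.Iio (k (n + 1)), y i = z i) →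
          g y m = true → g z m = true := by
        intro y z hyz hy
        obtain ⟨n', h, hmin⟩ := (hg y m).mp hy
        obtain rfl := huniq m n n' hn h.2
        refine (hg z m).mpr ⟨n, ⟨?_, hn⟩, ?_⟩
        · exact (hyz m hn.2).symm.trans h.1
        · intro j hj
          exact hmin j ⟨(hyz j hj.2.2).trans hj.1, hj.2⟩
      filter_upwards [hev] with y hy
      rw [Bool.eq_iff_iff]
      exact ⟨key y x hy, key x y fun i hi => (hy i hi).symm⟩
    exact hc.comp continuous_subtype_val
  · intro x hx
    refine ⟨hsel _ ?_, ?_, hsub x⟩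
    · intro n a ha b hb
      obtain ⟨p, hp, hpm⟩ := (hg x a).mp ha.1
      obtain ⟨q, hq, hqm⟩ := (hg x b).mp hb.1
      obtain rfl := huniq a n p ha.2 hp.2
      obtain rfl := huniq b n q hb.2 hq.2
      exact le_antisymm (hpm b hq) (hqm a hp)
    · refine Set.infinite_of_not_bddAbove ?_
      rintro ⟨N, hN⟩
      obtain ⟨a, ha, hNa⟩ := hx.exists_gt (k (N + 1))
      obtain ⟨n, hn⟩ := hex a
      have h1 : N + 1 < n + 1 := hkmono.lt_iff_lt.mp (hNa.trans hn.2)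
      classical
      have h : ∃ j, j ∈ suppB x ∩ Set.Ico (k n) (k (n + 1)) := ⟨a, ha, hn⟩
      have hs := Nat.find_spec h
      have hm : g x (Nat.find h) = true :=
        (hg x _).mpr ⟨n, hs, fun j hj => Nat.find_min' h hj⟩
      have h2 : Nat.find h ≤ N := hN hm
      have h3 : n ≤ k n := hkmono.le_apply
      have h4 := hs.2.1
      omega
end

section
/- Having a Borel selector is upward-closed in the Katětov order: if I and J are tall Borel ideals on ℕ, I contains all finite subsets of ℕ, I ≤_K J, and I has a Borel selector, then J has a Borel selector. -/
theorem measurableSet_infiniteB : MeasurableSet {x : ℕ → Bool | InfiniteB x} := by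
  have h : {x : ℕ → Bool | InfiniteB x} = ⋂ n : ℕ, ⋃ m : ℕ, ⋃ _ : n < m, {x | x m = true} := by
    ext x
    simp only [Set.mem_ofPred_eq, Set.mem_iInter, Set.mem_iUnion, InfiniteB,
      Set.infinite_iff_exists_gt, suppB]
    exact forall_congr' fun n => exists_congr fun m => by tauto
  rw [h]
  refine MeasurableSet.iInter fun n => MeasurableSet.iUnion fun m => MeasurableSet.iUnion fun _ => ?_
  exact measurableSet_eq_fun (measurable_pi_apply m) measurable_const

open Classical in
/-- Image of a coded set under `f`. -/
noncomputable def imB (f : ℕ → ℕ) (x : ℕ → Bool) : ℕ → Bool :=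
  fun n => decide (∃ m, x m = true ∧ f m = n)

theorem measurable_imB (f : ℕ → ℕ) : Measurable (imB f) := by
  refine measurable_pi_lambda _ fun n => measurable_to_bool ?_
  have h : (fun x => imB f x n) ⁻¹' {true} = ⋃ m : ℕ, ⋃ _ : f m = n, {x | x m = true} := by
    ext x
    simp only [Set.mem_preimage, Set.mem_singleton_iff, imB, decide_eq_true_eq, Set.mem_iUnion,
      Set.mem_ofPred_eq]
    exact exists_congr fun m => by tauto
  rw [h]
  refine MeasurableSet.iUnion fun m => MeasurableSet.iUnion fun _ => ?_
  exact measurableSet_eq_fun (measurable_pi_apply m) measurable_const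

/-- Having a Borel selector is upward closed in the Katětov order: if `I ≤_K J` are tall Borel
ideals on `ℕ`, `I` contains all finite sets, and `I` has a Borel selector, then so does `J`. -/
theorem borel_selector_upward_closed (I J : Set (ℕ → Bool))
    (hI : IsIdealB I) (hJ : IsIdealB J) (hItall : IsTallB I) (hJtall : IsTallB J)
    (hIB : MeasurableSet I) (hJB : MeasurableSet J) (hIfin : ContainsFinB I)
    (hK : KatLE I J)
    (S : (ℕ → Bool) → (ℕ → Bool)) (hS : Measurable S)
    (hsel : ∀ x : ℕ → Bool, InfiniteB x → S x ∈ I ∧ InfiniteB (S x) ∧ subB (S x) x) :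
    ∃ T : (ℕ → Bool) → (ℕ → Bool), Measurable T ∧
      ∀ x : ℕ → Bool, InfiniteB x → T x ∈ J ∧ InfiniteB (T x) ∧ subB (T x) x := by
  classical
  obtain ⟨f, hf⟩ := hK
  refine ⟨fun x => if InfiniteB (imB f x) then (fun m => x m && S (imB f x) (f m)) else x,
    ?_, ?_⟩
  · refine Measurable.ite (measurable_imB f measurableSet_infiniteB) ?_ measurable_id
    refine measurable_pi_lambda _ fun m => ?_
    have h1 : Measurable fun x : ℕ → Bool => x m := measurable_pi_apply m
    have h2 : Measurable fun x : ℕ → Bool => S (imB f x) (f m) :=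
      (measurable_pi_apply (f m)).comp (hS.comp (measurable_imB f))
    exact (measurable_of_countable (fun p : Bool × Bool => p.1 && p.2)).comp (h1.prodMk h2)
  · intro x hx
    by_cases h : InfiniteB (imB f x)
    · simp only [if_pos h]
      obtain ⟨h1, h2, h3⟩ := hsel _ h
      refine ⟨hJ.1 _ (hf _ h1) _ ?_, ?_, ?_⟩
      · intro a ha
        simp only [Bool.and_eq_true] at ha
        exact ha.2
      · refine Set.Infinite.of_image f (h2.mono ?_)
        intro n hn
        have hn' := h3 n hn
        simp only [imB, decide_eq_true_eq] at hn'
        obtain ⟨m, hm, rfl⟩ := hn'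
        refine ⟨m, ?_, rfl⟩
        have hn2 : S (imB f x) (f m) = true := hn
        simp [suppB, hm, hn2]
      · intro a ha
        simp only [Bool.and_eq_true] at ha
        exact ha.1
    · simp only [if_neg h]
      refine ⟨hJ.1 _ (hf _ (hIfin _ (Set.not_infinite.mp h))) _ ?_, hx, fun a ha => ha⟩
      intro a ha
      simp only [imB, decide_eq_true_eq]
      exact ⟨a, ha, rfl⟩
end
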